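/- There exists a positive constant C, independent of j and p, such that for every integer p ≥ 0 and every j with 0 ≤ j ≤ p, the eigenvalues λ_0 ≥ λ_1 ≥ … ≥ λ_p of the generalized eigenvalue problem λ ∫_{−1}^{1} (I φ)'(I v)' ds = ∫_{−1}^{1} φ v ds (for all v ∈ P_p) satisfy λ_j ≤ C (j+1)^{−2}. -/

import Mathlib

open Polynomial

/-- The `k`-th Legendre polynomial (Rodrigues' formula), normalized so that `L_k(1) = 1`
and `∫_{−1}^{1} L_k L_j ds = 2δ_{kj}/(2k+1)`. -/
noncomputable def legendre (k : ℕ) : Polynomial ℝ :=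
  ((2 ^ k * (Nat.factorial k) : ℝ))⁻¹ •
    ((fun q => Polynomial.derivative q)^[k] ((Polynomial.X ^ 2 - 1) ^ k))

/-- The reconstruction operator `I : P_p → P_{p+1}`,
`I v := v − v(−1)·(−1)^p (L_p − L_{p+1})/2`. -/
noncomputable def recon (p : ℕ) (v : Polynomial ℝ) : Polynomial ℝ :=
  v - (v.eval (-1) * (-1 : ℝ) ^ p / 2) • (legendre p - legendre (p + 1))

/-- The `L²(-1,1)` inner product as a bilinear map on polynomials. -/
noncomputable def ipL : ℝ[X] →ₗ[ℝ] ℝ[X] →ₗ[ℝ] ℝ :=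
  LinearMap.mk₂ ℝ (fun f g => ∫ s in (-1 : ℝ)..1, f.eval s * g.eval s)
    (by
      intro f g h
      simp only [eval_add, add_mul]
      exact intervalIntegral.integral_add
        ((by fun_prop : Continuous fun s => f.eval s * h.eval s).intervalIntegrable _ _)
        ((by fun_prop : Continuous fun s => g.eval s * h.eval s).intervalIntegrable _ _))
    (by
      intro c f g
      simp only [eval_smul, smul_eq_mul, mul_assoc]
      exact intervalIntegral.integral_const_mul _ _)
    (by
      intro f g h
      simp only [eval_add, mul_add]
      exact intervalIntegral.integral_add
        ((by fun_prop : Continuous fun s => f.eval s * g.eval s).intervalIntegrable _ _)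
        ((by fun_prop : Continuous fun s => f.eval s * h.eval s).intervalIntegrable _ _))
    (by
      intro c f g
      simp only [eval_smul, smul_eq_mul, mul_left_comm _ c]
      exact intervalIntegral.integral_const_mul _ _)

lemma ipL_apply (f g : ℝ[X]) : ipL f g = ∫ s in (-1 : ℝ)..1, f.eval s * g.eval s := rfl

lemma ipL_comm (f g : ℝ[X]) : ipL f g = ipL g f := by
  simp only [ipL_apply, mul_comm]

lemma ipL_self_nonneg (f : ℝ[X]) : 0 ≤ ipL f f := by
  rw [ipL_apply]
  exact intervalIntegral.integral_nonneg (by norm_num) (fun s _ => mul_self_nonneg _)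

/-- integration by parts -/
lemma ipL_parts (f g : ℝ[X]) :
    ipL (derivative f) g
      = f.eval 1 * g.eval 1 - f.eval (-1) * g.eval (-1) - ipL f (derivative g) := by
  have h := intervalIntegral.integral_deriv_mul_eq_sub
    (a := (-1 : ℝ)) (b := 1) (u := fun s => f.eval s) (v := fun s => g.eval s)
    (u' := fun s => (derivative f).eval s) (v' := fun s => (derivative g).eval s)
    (fun x _ => f.hasDerivAt x) (fun x _ => g.hasDerivAt x)
    ((by fun_prop : Continuous fun s => (derivative f).eval s).intervalIntegrable _ _)
    ((by fun_prop : Continuous fun s => (derivative g).eval s).intervalIntegrable _ _)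
  rw [intervalIntegral.integral_add
        ((by fun_prop : Continuous fun s => (derivative f).eval s * g.eval s).intervalIntegrable _ _)
        ((by fun_prop : Continuous fun s => f.eval s * (derivative g).eval s).intervalIntegrable _ _)]
    at h
  rw [ipL_apply, ipL_apply]
  linarith

lemma iter_deriv_eval (a : ℝ) (q : ℝ[X]) (k i : ℕ) :
    (derivative^[i] ((X - C a) ^ k * q)).eval a
      = (i.factorial : ℝ) * (X ^ k * taylor a q).coeff i := by
  have h1 : derivative^[i] ((X - C a) ^ k * q)
      = (i.factorial) • hasseDeriv i ((X - C a) ^ k * q) := by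
    have := congrFun (factorial_smul_hasseDeriv (R := ℝ) i) ((X - C a) ^ k * q)
    rw [← this]
    rfl
  rw [h1, eval_smul, ← taylor_coeff, nsmul_eq_mul]
  congr 2
  simp [taylor_mul, taylor_pow]

lemma legendre_eq (k : ℕ) : legendre k
    = ((2 ^ k * (Nat.factorial k) : ℝ))⁻¹ • derivative^[k] ((X ^ 2 - 1) ^ k) := rfl

lemma Q_one (k : ℕ) : ((X : ℝ[X]) ^ 2 - 1) ^ k = (X - C 1) ^ k * (X + 1) ^ k := by
  rw [← mul_pow]; congr 1; simp; ring

lemma Q_neg (k : ℕ) : ((X : ℝ[X]) ^ 2 - 1) ^ k = (X - C (-1)) ^ k * (X - 1) ^ k := by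
  rw [← mul_pow]; congr 1; simp; ring

lemma iterQ_one (k i : ℕ) (h : i < k) : (derivative^[i] (((X : ℝ[X]) ^ 2 - 1) ^ k)).eval 1 = 0 := by
  rw [Q_one, iter_deriv_eval, coeff_X_pow_mul', if_neg (by omega), mul_zero]

lemma iterQ_neg (k i : ℕ) (h : i < k) :
    (derivative^[i] (((X : ℝ[X]) ^ 2 - 1) ^ k)).eval (-1) = 0 := by
  rw [Q_neg, iter_deriv_eval, coeff_X_pow_mul', if_neg (by omega), mul_zero]

lemma legendre_eval_one (k : ℕ) : (legendre k).eval 1 = 1 := by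
  rw [legendre_eq, Q_one, eval_smul, iter_deriv_eval, coeff_X_pow_mul', if_pos le_rfl]
  have : (taylor (1 : ℝ) ((X + 1) ^ k)).coeff (k - k) = 2 ^ k := by
    rw [Nat.sub_self, taylor_coeff_zero]; simp; norm_num
  rw [this, smul_eq_mul]
  have := Nat.factorial_ne_zero k
  field_simp

lemma legendre_eval_neg (k : ℕ) : (legendre k).eval (-1) = (-1) ^ k := by
  rw [legendre_eq, Q_neg, eval_smul, iter_deriv_eval, coeff_X_pow_mul', if_pos le_rfl]
  have : (taylor (-1 : ℝ) ((X - 1) ^ k)).coeff (k - k) = (-1) ^ k * 2 ^ k := by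
    rw [Nat.sub_self, taylor_coeff_zero, ← mul_pow]; simp; norm_num
  rw [this, smul_eq_mul]
  have := Nat.factorial_ne_zero k
  field_simp

lemma legendre_zero : legendre 0 = 1 := by simp [legendre]

lemma legendre_one : legendre 1 = X := by
  simp [legendre_eq, smul_eq_C_mul, ← mul_assoc]
  rw [← C_1, ← C_add, ← C_mul]; norm_num

lemma Q_monic (k : ℕ) : (((X : ℝ[X]) ^ 2 - 1) ^ k).Monic :=
  Monic.pow (by simpa using monic_X_pow_sub_C (1 : ℝ) (two_ne_zero)) k

lemma Q_natDegree (k : ℕ) : (((X : ℝ[X]) ^ 2 - 1) ^ k).natDegree = k + k := by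
  rw [natDegree_pow]
  have := natDegree_X_pow_sub_C (R := ℝ) (n := 2) (r := 1)
  rw [C_1] at this
  rw [this]; ring

lemma legendre_natDegree_le (k : ℕ) : (legendre k).natDegree ≤ k := by
  rw [legendre_eq]
  refine (natDegree_smul_le _ _).trans ((natDegree_iterate_derivative _ _).trans ?_)
  rw [Q_natDegree]; omega

lemma legendre_coeff_ne (k : ℕ) : (legendre k).coeff k ≠ 0 := by
  rw [legendre_eq, coeff_smul, coeff_iterate_derivative]
  have h : (((X : ℝ[X]) ^ 2 - 1) ^ k).coeff (k + k) = 1 := by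
    have := (Q_monic k).coeff_natDegree
    rwa [Q_natDegree] at this
  rw [h]
  have h1 := Nat.factorial_ne_zero k
  have h2 : (k + k).descFactorial k ≠ 0 := by
    rw [Ne, Nat.descFactorial_eq_zero_iff_lt]; omega
  simp [h1, h2]

lemma legendre_deriv (k : ℕ) :
    derivative (legendre (k + 2)) - derivative (legendre k)
      = (2 * (k : ℝ) + 3) • legendre (k + 1) := by
  have h2 : derivative (derivative (((X : ℝ[X]) ^ 2 - 1) ^ (k + 2)))
      = (2 * ((k : ℝ) + 2) * (2 * k + 3)) • (((X : ℝ[X]) ^ 2 - 1) ^ (k + 1))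
        + (4 * ((k : ℝ) + 2) * (k + 1)) • (((X : ℝ[X]) ^ 2 - 1) ^ k) := by
    simp only [derivative_pow, derivative_mul, derivative_sub, derivative_X, smul_eq_C_mul,
      Nat.add_sub_cancel, map_add, map_mul, map_natCast, map_ofNat, map_one]
    simp
    ring
  have h3 : derivative (derivative^[k + 2] (((X : ℝ[X]) ^ 2 - 1) ^ (k + 2)))
      = (2 * ((k : ℝ) + 2) * (2 * k + 3)) • derivative^[k + 1] (((X : ℝ[X]) ^ 2 - 1) ^ (k + 1))
        + (4 * ((k : ℝ) + 2) * (k + 1)) • derivative (derivative^[k] (((X : ℝ[X]) ^ 2 - 1) ^ k)) := by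
    rw [← Function.iterate_succ_apply' derivative, Function.iterate_succ_apply, Function.iterate_succ_apply,
      h2, iterate_map_add, iterate_derivative_smul, iterate_derivative_smul,
      Function.iterate_succ_apply' _ k (((X : ℝ[X]) ^ 2 - 1) ^ k)]
  rw [legendre_eq, legendre_eq, legendre_eq, derivative_smul, derivative_smul, h3, smul_add,
    smul_smul, smul_smul, smul_smul]
  have hf := Nat.factorial_ne_zero k
  have e1 : ((2 ^ (k + 2) * (k + 2).factorial : ℝ))⁻¹ * (4 * ((k : ℝ) + 2) * (k + 1))
      = ((2 ^ k * k.factorial : ℝ))⁻¹ := by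
    rw [Nat.factorial_succ, Nat.factorial_succ]; push_cast
    have : (k : ℝ) + 1 ≠ 0 := by positivity
    have : (k : ℝ) + 1 + 1 ≠ 0 := by positivity
    field_simp
    ring
  have e2 : ((2 ^ (k + 2) * (k + 2).factorial : ℝ))⁻¹ * (2 * ((k : ℝ) + 2) * (2 * k + 3))
      = (2 * (k : ℝ) + 3) * ((2 ^ (k + 1) * (k + 1).factorial : ℝ))⁻¹ := by
    rw [Nat.factorial_succ (k + 1)]; push_cast
    have : (k : ℝ) + 1 + 1 ≠ 0 := by positivity
    have := Nat.factorial_ne_zero (k + 1)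
    field_simp
    ring
  rw [e1, e2]
  abel

lemma iterQ_orth (k i : ℕ) (hi : i ≤ k) : ∀ q : ℝ[X], q.degree < (i : ℕ) →
    ipL (derivative^[i] (((X : ℝ[X]) ^ 2 - 1) ^ k)) q = 0 := by
  induction i with
  | zero =>
    intro q hq
    have : q = 0 := by
      by_contra h
      rw [degree_eq_natDegree h] at hq
      exact absurd (by exact_mod_cast hq) (Nat.not_lt_zero q.natDegree)
    simp [this]
  | succ i ih =>
    intro q hq
    rw [Function.iterate_succ_apply', ipL_parts, iterQ_one k i (by omega), iterQ_neg k i (by omega),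
      ih (by omega)]
    · simp
    · by_cases h : q = 0
      · simp [h]
      · have h1 := degree_derivative_lt h
        refine lt_of_lt_of_le h1 ?_
        rw [degree_eq_natDegree h] at hq ⊢
        have : q.natDegree < i + 1 := by exact_mod_cast hq
        exact_mod_cast Nat.lt_succ_iff.mp this

lemma legendre_orth (k : ℕ) (q : ℝ[X]) (hq : q.degree < (k : ℕ)) : ipL (legendre k) q = 0 := by
  rw [legendre_eq, map_smul, LinearMap.smul_apply, iterQ_orth k k le_rfl q hq, smul_zero]

lemma legendre_degree_le (k : ℕ) : (legendre k).degree ≤ (k : ℕ) :=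
  natDegree_le_iff_degree_le.mp (legendre_natDegree_le k)

lemma legendre_orth_ne (k l : ℕ) (h : k ≠ l) : ipL (legendre k) (legendre l) = 0 := by
  rcases lt_or_gt_of_ne h with h | h
  · rw [ipL_comm]
    exact legendre_orth _ _ ((legendre_degree_le k).trans_lt (by exact_mod_cast h))
  · exact legendre_orth _ _ ((legendre_degree_le l).trans_lt (by exact_mod_cast h))

lemma degree_derivative_legendre (k : ℕ) : (derivative (legendre k)).degree < (k : ℕ) := by
  have h : legendre k ≠ 0 := fun h => legendre_coeff_ne k (by simp [h])
  exact (degree_derivative_lt h).trans_le (legendre_degree_le k)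

lemma legendre_norm (k : ℕ) : ipL (legendre k) (legendre k) = 2 / (2 * (k : ℝ) + 1) := by
  cases k with
  | zero => simp [legendre_zero, ipL_apply]; norm_num
  | succ k =>
    have h := congrArg (fun r => ipL r (legendre (k + 1))) (legendre_deriv k)
    simp only [map_sub, map_smul, LinearMap.sub_apply, LinearMap.smul_apply, smul_eq_mul] at h
    have h1 : ipL (derivative (legendre k)) (legendre (k + 1)) = 0 := by
      rw [ipL_comm]
      refine legendre_orth _ _ ((degree_derivative_legendre k).trans ?_)
      exact_mod_cast Nat.lt_succ_self k
    have h2 : ipL (legendre (k + 2)) (derivative (legendre (k + 1))) = 0 := by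
      refine legendre_orth _ _ ((degree_derivative_legendre (k + 1)).trans ?_)
      exact_mod_cast Nat.lt_succ_self (k + 1)
    rw [h1, ipL_parts, h2, legendre_eval_one, legendre_eval_one, legendre_eval_neg,
      legendre_eval_neg, ← pow_add, show k + 2 + (k + 1) = 2 * (k + 1) + 1 by ring, pow_succ,
      pow_mul] at h
    norm_num at h
    rw [eq_div_iff (by positivity)]
    push_cast
    linarith

lemma norm_sum_legendre (n s : ℕ) (b : ℕ → ℝ) :
    ipL (∑ k ∈ Finset.range n, b k • legendre (k + s)) (∑ k ∈ Finset.range n, b k • legendre (k + s))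
      = ∑ k ∈ Finset.range n, b k ^ 2 * (2 / (2 * ((k : ℝ) + s) + 1)) := by
  simp only [map_sum, LinearMap.sum_apply, map_smul, LinearMap.smul_apply, smul_eq_mul]
  refine Finset.sum_congr rfl fun k hk => ?_
  rw [Finset.sum_eq_single k]
  · rw [legendre_norm]; push_cast; ring
  · intro l _ hl
    rw [legendre_orth_ne _ _ (by omega)]; simp
  · intro h; exact absurd hk h

lemma legendre_expand (n : ℕ) : ∀ w : ℝ[X], w.natDegree ≤ n →
    ∃ a : ℕ → ℝ, w = ∑ k ∈ Finset.range (n + 1), a k • legendre k := by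
  induction n with
  | zero =>
    intro w hw
    refine ⟨fun _ => w.coeff 0, ?_⟩
    rw [eq_C_of_natDegree_le_zero hw]
    simp [legendre_zero, smul_eq_C_mul]
  | succ n ih =>
    intro w hw
    set c := w.coeff (n + 1) / (legendre (n + 1)).coeff (n + 1) with hc
    have hd : (w - c • legendre (n + 1)).natDegree ≤ n := by
      rw [natDegree_le_iff_coeff_eq_zero]
      intro N hN
      rw [coeff_sub, coeff_smul, smul_eq_mul]
      rcases Nat.lt_or_ge (n + 1) N with h | h
      · rw [coeff_eq_zero_of_natDegree_lt (hw.trans_lt h),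
          coeff_eq_zero_of_natDegree_lt ((legendre_natDegree_le _).trans_lt h)]; simp
      · have : N = n + 1 := by omega
        subst this
        rw [hc, div_mul_cancel₀ _ (legendre_coeff_ne _), sub_self]
    obtain ⟨a, ha⟩ := ih _ hd
    refine ⟨fun k => if k = n + 1 then c else a k, ?_⟩
    rw [Finset.sum_range_succ]
    simp only [if_true]
    rw [Finset.sum_congr rfl (g := fun k => a k • legendre k), ← ha]
    · simp
    · intro k hk
      rw [if_neg (by have := Finset.mem_range.mp hk; omega)]

/-- `recon` followed by differentiation, as a linear map. -/
noncomputable def dRecon (p : ℕ) : ℝ[X] →ₗ[ℝ] ℝ[X] where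
  toFun v := derivative (recon p v)
  map_add' u v := by
    rw [← derivative_add]; congr 1
    simp only [recon, eval_add, add_mul, add_div, add_smul]; abel
  map_smul' c v := by
    rw [RingHom.id_apply, ← derivative_smul]; congr 1
    simp only [recon, eval_smul, smul_eq_mul, smul_sub, smul_smul, mul_assoc, mul_div_assoc]

lemma dRecon_apply (p : ℕ) (v : ℝ[X]) : dRecon p v = derivative (recon p v) := rfl

lemma recon_eval_neg (p : ℕ) (v : ℝ[X]) : (recon p v).eval (-1) = 0 := by
  simp only [recon, eval_sub, eval_smul, legendre_eval_neg, smul_eq_mul, pow_succ]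
  have : ((-1 : ℝ) ^ p) * (-1) ^ p = 1 := by rw [← mul_pow]; norm_num
  linear_combination (-(v.eval (-1))) * this

lemma dRecon_natDegree (p : ℕ) (v : ℝ[X]) (hv : v.natDegree ≤ p) :
    (dRecon p v).natDegree ≤ p := by
  have : (recon p v).natDegree ≤ p + 1 := by
    refine (natDegree_sub_le _ _).trans (max_le (by omega) ?_)
    refine (natDegree_smul_le _ _).trans ((natDegree_sub_le _ _).trans (max_le ?_ ?_))
    · exact (legendre_natDegree_le p).trans (by omega)
    · exact legendre_natDegree_le (p + 1)
  rw [dRecon_apply]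
  exact (natDegree_derivative_le _).trans (by omega)

lemma antideriv (n : ℕ) (w : ℕ → ℝ) (U : ℝ[X]) (hU : U.eval (-1) = 0)
    (hw : derivative U = ∑ k ∈ Finset.range (n + 1), w k • legendre k) :
    U = ∑ k ∈ Finset.range (n + 1), (w k / (2 * (k : ℝ) + 1)) • legendre (k + 1)
      - ∑ k ∈ Finset.range n, (w (k + 1) / (2 * (k : ℝ) + 3)) • legendre (k + 0)
      + w 0 • legendre 0 := by
  set V := ∑ k ∈ Finset.range (n + 1), (w k / (2 * (k : ℝ) + 1)) • legendre (k + 1)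
      - ∑ k ∈ Finset.range n, (w (k + 1) / (2 * (k : ℝ) + 3)) • legendre (k + 0)
      + w 0 • legendre 0 with hV
  have hV' : V = ∑ k ∈ Finset.range n,
      (w (k + 1) / (2 * (k : ℝ) + 3)) • (legendre (k + 2) - legendre k)
      + w 0 • (legendre 1 + legendre 0) := by
    rw [hV, Finset.sum_range_succ']
    simp only [smul_sub, Finset.sum_sub_distrib, smul_add, add_zero]
    have : ∀ k : ℕ, w (k + 1) / (2 * ((k + 1 : ℕ) : ℝ) + 1) = w (k + 1) / (2 * (k : ℝ) + 3) := by
      intro k; push_cast; congr 1; ring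
    simp only [this]
    simp
    abel
  have hd : derivative V = derivative U := by
    rw [hV', hw, derivative_add, derivative_sum, Finset.sum_range_succ']
    congr 1
    · refine Finset.sum_congr rfl fun k _ => ?_
      rw [derivative_smul, derivative_sub, legendre_deriv, smul_smul, div_mul_cancel₀]
      positivity
    · simp [legendre_zero, legendre_one]
  have he : V.eval (-1) = 0 := by
    rw [hV', eval_add, eval_finset_sum]
    simp [legendre_eval_neg, pow_succ]
  have h0 : derivative (U - V) = 0 := by rw [derivative_sub, hd, sub_self]
  have h1 := natDegree_eq_zero_of_derivative_eq_zero h0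
  have h2 := eq_C_of_natDegree_eq_zero h1
  have h3 : (U - V).eval (-1) = 0 := by rw [eval_sub, hU, he, sub_zero]
  rw [h2, eval_C] at h3
  rw [h3, C_0] at h2
  exact sub_eq_zero.mp h2

lemma ipL_five (a b c d e : ℝ[X]) :
    ipL (a - b + c + d - e) (a - b + c + d - e)
      ≤ 5 * (ipL a a + ipL b b + ipL c c + ipL d d + ipL e e) := by
  have h1 := ipL_self_nonneg (a + b)
  have h2 := ipL_self_nonneg (a - c)
  have h3 := ipL_self_nonneg (a - d)
  have h4 := ipL_self_nonneg (a + e)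
  have h5 := ipL_self_nonneg (b + c)
  have h6 := ipL_self_nonneg (b + d)
  have h7 := ipL_self_nonneg (b - e)
  have h8 := ipL_self_nonneg (c - d)
  have h9 := ipL_self_nonneg (c + e)
  have h10 := ipL_self_nonneg (d + e)
  simp only [map_add, map_sub, LinearMap.add_apply, LinearMap.sub_apply, ipL_comm b a, ipL_comm c a,
    ipL_comm d a, ipL_comm e a, ipL_comm c b, ipL_comm d b, ipL_comm e b, ipL_comm d c,
    ipL_comm e c, ipL_comm e d] at *
  linarith

lemma core (p j : ℕ) (hj : j ≤ p) (v : ℝ[X]) (hv : v.natDegree ≤ p)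
    (horth : ∀ k < j, ipL (dRecon p v) (legendre k) = 0) :
    ipL v v ≤ 35 / ((j : ℝ) + 1) ^ 2 * ipL (dRecon p v) (dRecon p v) := by
  obtain ⟨w, hw⟩ := legendre_expand p _ (dRecon_natDegree p v hv)
  have hw0 : ∀ k < j, w k = 0 := by
    intro k hk
    have h := horth k hk
    rw [hw] at h
    simp only [map_sum, LinearMap.sum_apply, map_smul, LinearMap.smul_apply, smul_eq_mul] at h
    rw [Finset.sum_eq_single k, legendre_norm] at h
    · have : (2 / (2 * (k : ℝ) + 1)) ≠ 0 := by positivity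
      exact (mul_eq_zero.mp h).resolve_right this
    · intro l _ hl
      rw [legendre_orth_ne _ _ hl, mul_zero]
    · intro h; exact absurd (Finset.mem_range.mpr (by omega)) h
  set N := ipL (dRecon p v) (dRecon p v) with hN
  have hNs : N = ∑ k ∈ Finset.range (p + 1), w k ^ 2 * (2 / (2 * (k : ℝ) + 1)) := by
    have := norm_sum_legendre (p + 1) 0 w
    simp only [add_zero, ← hw, Nat.cast_zero] at this
    exact this
  have hU := antideriv p w (recon p v) (recon_eval_neg p v) hw
  set c := v.eval (-1) * (-1 : ℝ) ^ p / 2 with hc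
  set A := ∑ k ∈ Finset.range (p + 1), (w k / (2 * (k : ℝ) + 1)) • legendre (k + 1) with hA
  set B := ∑ k ∈ Finset.range p, (w (k + 1) / (2 * (k : ℝ) + 3)) • legendre (k + 0) with hB
  have hvv : v = A - B + w 0 • legendre 0 + c • legendre p - c • legendre (p + 1) := by
    have : v = recon p v + c • (legendre p - legendre (p + 1)) := by
      rw [recon, ← hc]; abel
    rw [hU, smul_sub] at this
    rw [this]; abel
  have hcw : c = w p / (2 * (p : ℝ) + 1) := by
    have h := congrArg (fun r => coeff r (p + 1)) hvv
    have hz : ∀ k ≤ p, (legendre k).coeff (p + 1) = 0 := fun k hk =>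
      coeff_eq_zero_of_natDegree_lt ((legendre_natDegree_le k).trans_lt (by omega))
    have hBz : B.coeff (p + 1) = 0 := by
      rw [hB, finset_sum_coeff]
      refine Finset.sum_eq_zero fun k hk => ?_
      rw [coeff_smul, hz _ (by have := Finset.mem_range.mp hk; omega), smul_zero]
    have hAz : A.coeff (p + 1) = w p / (2 * (p : ℝ) + 1) * (legendre (p + 1)).coeff (p + 1) := by
      rw [hA, finset_sum_coeff, Finset.sum_range_succ, Finset.sum_eq_zero, zero_add, coeff_smul,
        smul_eq_mul]
      intro k hk
      rw [coeff_smul, hz _ (by have := Finset.mem_range.mp hk; omega), smul_zero]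
    simp only [coeff_add, coeff_sub, coeff_smul, smul_eq_mul] at h
    rw [hBz, hAz, hz 0 (by omega), hz p le_rfl, coeff_eq_zero_of_natDegree_lt (by omega)] at h
    have h' : (w p / (2 * (p : ℝ) + 1) - c) * (legendre (p + 1)).coeff (p + 1) = 0 := by linarith
    have := (mul_eq_zero.mp h').resolve_right (legendre_coeff_ne _)
    linarith
  set J := 1 / ((j : ℝ) + 1) ^ 2 with hJ
  have hJ0 : 0 < J := by positivity
  -- pointwise comparison of denominators
  have hden : ∀ k : ℕ, j ≤ k → 1 / (2 * (k : ℝ) + 1) ^ 2 ≤ J := by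
    intro k hk
    have : (j : ℝ) ≤ k := by exact_mod_cast hk
    have : (0 : ℝ) ≤ j := by positivity
    rw [hJ]
    apply one_div_le_one_div_of_le (by positivity)
    apply pow_le_pow_left₀ (by positivity)
    linarith
  have hterm : ∀ k : ℕ, (w k / (2 * (k : ℝ) + 1)) ^ 2 ≤ J * w k ^ 2 := by
    intro k
    rcases Nat.lt_or_ge k j with h | h
    · simp [hw0 k h]
    · rw [div_pow, div_eq_mul_one_div, mul_comm]
      exact mul_le_mul_of_nonneg_right (hden k h) (sq_nonneg _)
  have hle : ∀ k ≤ p, w k ^ 2 * (2 / (2 * (k : ℝ) + 1)) ≤ N := by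
    intro k hk
    rw [hNs]
    exact Finset.single_le_sum (f := fun k => w k ^ 2 * (2 / (2 * (k : ℝ) + 1)))
      (fun i _ => by positivity) (Finset.mem_range.mpr (by omega))
  have bA : ipL A A ≤ J * N := by
    rw [hA, norm_sum_legendre, hNs, Finset.mul_sum]
    refine Finset.sum_le_sum fun k _ => ?_
    rw [← mul_assoc]
    refine mul_le_mul (hterm k) ?_ (by positivity) (by positivity)
    apply div_le_div_of_nonneg_left (by norm_num) (by positivity)
    push_cast; linarith
  have bB : ipL B B ≤ 3 * (J * N) := by
    rw [hB, norm_sum_legendre, hNs, Finset.sum_range_succ', mul_add, mul_add, Finset.mul_sum,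
      Finset.mul_sum]
    have : 0 ≤ 3 * (J * (w 0 ^ 2 * (2 / (2 * ((0 : ℕ) : ℝ) + 1)))) := by positivity
    refine le_trans (Finset.sum_le_sum fun k _ => ?_) (le_add_of_nonneg_right this)
    have h := hterm (k + 1)
    have e : (2 * ((k + 1 : ℕ) : ℝ) + 1) = 2 * (k : ℝ) + 3 := by push_cast; ring
    rw [e] at h ⊢
    have h3 : 2 / (2 * ((k : ℝ) + (0 : ℕ)) + 1) ≤ 3 * (2 / (2 * (k : ℝ) + 3)) := by
      have hk : (0 : ℝ) ≤ k := by positivity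
      rw [← mul_div_assoc, div_le_div_iff₀ (by positivity) (by positivity)]
      push_cast; nlinarith
    calc _ ≤ (J * w (k + 1) ^ 2) * (3 * (2 / (2 * (k : ℝ) + 3))) :=
          mul_le_mul h h3 (by positivity) (by positivity)
      _ = _ := by ring
  have b0 : ipL (w 0 • legendre 0) (w 0 • legendre 0) ≤ J * N := by
    have h := hterm 0
    have h2 := hle 0 (by omega)
    simp only [map_smul, LinearMap.smul_apply, smul_eq_mul, legendre_norm]
    simp at h h2 ⊢
    calc w 0 * (w 0 * 2) = w 0 ^ 2 * 2 := by ring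
      _ ≤ J * w 0 ^ 2 * 2 := by linarith
      _ = J * (w 0 ^ 2 * 2) := by ring
      _ ≤ J * N := mul_le_mul_of_nonneg_left h2 hJ0.le
  have bc : c ^ 2 * (2 / (2 * (p : ℝ) + 1)) ≤ J * N := by
    rw [hcw]
    calc _ ≤ (J * w p ^ 2) * (2 / (2 * (p : ℝ) + 1)) :=
          mul_le_mul_of_nonneg_right (hterm p) (by positivity)
      _ = J * (w p ^ 2 * (2 / (2 * (p : ℝ) + 1))) := by ring
      _ ≤ J * N := mul_le_mul_of_nonneg_left (hle p le_rfl) hJ0.le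
  have bp : ipL (c • legendre p) (c • legendre p) ≤ J * N := by
    simp only [map_smul, LinearMap.smul_apply, smul_eq_mul, legendre_norm]
    linarith
  have bp1 : ipL (c • legendre (p + 1)) (c • legendre (p + 1)) ≤ J * N := by
    simp only [map_smul, LinearMap.smul_apply, smul_eq_mul, legendre_norm]
    refine le_trans ?_ bc
    rw [← mul_assoc, ← sq]
    apply mul_le_mul_of_nonneg_left _ (sq_nonneg _)
    apply div_le_div_of_nonneg_left (by norm_num) (by positivity)
    push_cast; linarith
  have hfive := ipL_five A B (w 0 • legendre 0) (c • legendre p) (c • legendre (p + 1))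
  rw [← hvv] at hfive
  have : 35 / ((j : ℝ) + 1) ^ 2 * N = 35 * (J * N) := by rw [hJ]; ring
  rw [this]
  linarith

/-- **Upper bound on the eigenvalues.** There is a constant `C > 0`, independent of `j` and
`p`, such that for every `p ≥ 0`, the decreasingly ordered eigenvalues `λ_0 ≥ … ≥ λ_p` of the
generalized eigenvalue problem
`λ ∫_{−1}^{1} (I φ)'(I v)' ds = ∫_{−1}^{1} φ v ds` for all `v ∈ P_p`
(with eigenfunctions `φ_j ∈ P_p` orthonormalized in the inner product
`(u,v) ↦ ∫_{−1}^{1} (I u)'(I v)' ds`) satisfy `λ_j ≤ C (j+1)⁻²`. -/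
theorem eigenvalue_upper_bound :
    ∃ C : ℝ, 0 < C ∧ ∀ p : ℕ, ∀ lam : Fin (p + 1) → ℝ, ∀ φ : Fin (p + 1) → Polynomial ℝ,
      (∀ j, (φ j).natDegree ≤ p) →
      (∀ j, 0 < lam j) →
      (∀ j k : Fin (p + 1),
        (∫ s in (-1 : ℝ)..1,
            (Polynomial.derivative (recon p (φ j))).eval s *
              (Polynomial.derivative (recon p (φ k))).eval s)
          = if j = k then 1 else 0) →
      (∀ j : Fin (p + 1), ∀ v : Polynomial ℝ, v.natDegree ≤ p →
        lam j * (∫ s in (-1 : ℝ)..1,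
            (Polynomial.derivative (recon p (φ j))).eval s *
              (Polynomial.derivative (recon p v)).eval s)
          = ∫ s in (-1 : ℝ)..1, (φ j).eval s * v.eval s) →
      (∀ j k : Fin (p + 1), j ≤ k → lam k ≤ lam j) →
      ∀ j : Fin (p + 1), lam j ≤ C / ((j : ℝ) + 1) ^ 2 := by
  refine ⟨35, by norm_num, ?_⟩
  intro p lam φ hdeg hpos hon heig hmono j
  have hon' : ∀ j k, ipL (dRecon p (φ j)) (dRecon p (φ k)) = if j = k then 1 else 0 := hon
  have heig' : ∀ j, ∀ v : ℝ[X], v.natDegree ≤ p →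
      lam j * ipL (dRecon p (φ j)) (dRecon p v) = ipL (φ j) v := heig
  have hjp : (j : ℕ) ≤ p := by have := j.2; omega
  let e : Fin ((j : ℕ) + 1) → Fin (p + 1) := Fin.castLE (by omega)
  have he : Function.Injective e := Fin.castLE_injective _
  let V : (Fin ((j : ℕ) + 1) → ℝ) →ₗ[ℝ] ℝ[X] := Fintype.linearCombination ℝ (fun i => φ (e i))
  let F : (Fin ((j : ℕ) + 1) → ℝ) →ₗ[ℝ] (Fin (j : ℕ) → ℝ) :=
    LinearMap.pi fun k => (ipL (legendre k)).comp ((dRecon p).comp V)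
  have hker : LinearMap.ker F ≠ ⊥ := by
    apply LinearMap.ker_ne_bot_of_finrank_lt
    simp
  obtain ⟨a, ha, hane⟩ := (Submodule.ne_bot_iff _).mp hker
  have hV : V a = ∑ i, a i • φ (e i) := Fintype.linearCombination_apply ..
  have hVdeg : (V a).natDegree ≤ p := by
    rw [hV]
    exact natDegree_sum_le_of_forall_le _ _ fun i _ => (natDegree_smul_le _ _).trans (hdeg _)
  have horth : ∀ k < (j : ℕ), ipL (dRecon p (V a)) (legendre k) = 0 := by
    intro k hk
    rw [ipL_comm]
    exact congrFun (LinearMap.mem_ker.mp ha) ⟨k, hk⟩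
  have hB : ∀ i, ipL (dRecon p (φ (e i))) (dRecon p (V a)) = a i := by
    intro i
    rw [hV]
    simp only [map_sum, map_smul, smul_eq_mul, hon', he.eq_iff]
    simp
  have hN : ipL (dRecon p (V a)) (dRecon p (V a)) = ∑ i, a i ^ 2 := by
    conv_lhs => rw [show dRecon p (V a) = ∑ i, a i • dRecon p (φ (e i)) by
      rw [hV]; simp only [map_sum, map_smul]]
    rw [← show dRecon p (V a) = ∑ i, a i • dRecon p (φ (e i)) by
      rw [hV]; simp only [map_sum, map_smul]]
    conv_lhs => arg 1; rw [show dRecon p (V a) = ∑ i, a i • dRecon p (φ (e i)) by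
      rw [hV]; simp only [map_sum, map_smul]]
    simp only [map_sum, map_smul, LinearMap.sum_apply, LinearMap.smul_apply, hB, smul_eq_mul, sq]
  have hM : ipL (V a) (V a) = ∑ i, lam (e i) * a i ^ 2 := by
    have : ipL (V a) = ∑ i, a i • ipL (φ (e i)) := by
      rw [hV]; simp only [map_sum, map_smul]
    rw [this]
    simp only [LinearMap.sum_apply, LinearMap.smul_apply, smul_eq_mul]
    refine Finset.sum_congr rfl fun i _ => ?_
    rw [← heig' _ _ hVdeg, hB]; ring
  have hge : lam j * ∑ i, a i ^ 2 ≤ ∑ i, lam (e i) * a i ^ 2 := by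
    rw [Finset.mul_sum]
    refine Finset.sum_le_sum fun i _ => mul_le_mul_of_nonneg_right (hmono _ _ ?_) (sq_nonneg _)
    rw [Fin.le_def]
    have := i.2
    simp only [e, Fin.val_castLE]
    omega
  have hS : 0 < ∑ i, a i ^ 2 := by
    obtain ⟨i, hi⟩ := Function.ne_iff.mp hane
    refine Finset.sum_pos' (fun i _ => sq_nonneg _) ⟨i, Finset.mem_univ _, ?_⟩
    have hi' : a i ≠ 0 := hi
    positivity
  have hc := core p j hjp (V a) hVdeg horth
  rw [hM, hN] at hc
  exact le_of_mul_le_mul_right (hge.trans hc) hS
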